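/- arXiv:1401.8134 — 3 statements merged into one kernel-verified Lean document; each statement's English description precedes it below -/
import Mathlib

section
/- Write S(z) = 𝒮(Im z) (both integrals defining S depend only on Im z). Then: (i) 𝒮 is continuous on (0, Im g(b)) and extends continuously to [0, Im g(b)] with 𝒮(0) = 𝒮(Im g(b)) = 0; (ii) 𝒮(t) ≥ 0 for all t; (iii) at t = ⟨Im g⟩ the two integrals defining S are equal; (iv) 𝒮 is strictly increasing on (0, ⟨Im g⟩] and strictly decreasing on [⟨Im g⟩, Im g(b)), so it attains its maximum exactly at t = ⟨Im g⟩; (v) 𝒮(t) = 𝒮(⟨Im g⟩) + ∫_{⟨Im g⟩}^{t} D(s) ds, where D(s) := x₋ − x₊ evaluated at Im z = s when s ≤ ⟨Im g⟩ and D(s) := x₋ − 2π − x₊ evaluated at Im z = s when s > ⟨Im g⟩; the function D is C^∞ on (0, ⟨Im g⟩) and on (⟨Im g⟩, Im g(b)), its only discontinuity being at s = ⟨Im g⟩. -/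
/-!
Write `f = Im g`, let `m` be its mean and `M = f b` its maximum. Since `f` decreases from `M` to `0`
on `[b - 2π, a]` and increases back to `M` on `[a, b]`, the sublevel set `{f ≤ t}` in the period
`[b - 2π, b]` is `[x₊(t), x₋(t)]`. Hence the first integral is the truncated integral
`∫_{b-2π}^{b} max (t - f) 0` (`truncLow_eq`), which makes sense and is continuous for every real `t`.
Periodicity gives `A(t) - B(t) = 2π (t - m)` (`Aint_sub_Bint`), so that `B(t)` is the complementary
truncated integral `∫_{b-2π}^{b} max (f - t) 0` (`truncHigh_eq`). The minimum of the two truncated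
integrals is therefore nonnegative, extends `S` continuously to `[0, M]` and vanishes at both ends;
moreover `S = A` for `t ≤ m` and `S = B` for `t ≥ m`.

The integrand of `A` vanishes at both endpoints, so `A' = x₋ - x₊ > 0` (`hasDerivAt_Aint`) and
`B' = A' - 2π < 0`. Since `0 < m < M`, the monotonicity statements and the integral representation
follow from the sign of the derivative and from the fundamental theorem of calculus on each side
of `m`.
-/

open Set MeasureTheory

noncomputable section

/-- The mean `⟨g⟩ = (2π)⁻¹ ∫₀^{2π} g(y) dy`. -/
def gAvg (g : ℝ → ℂ) : ℂ := (2 * Real.pi)⁻¹ • ∫ y in (0:ℝ)..(2 * Real.pi), g y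

/-- `Im ∫_{x₊(t)}^{x₋(t)} (z - g(y)) dy` for `Im z = t`. -/
def Aint (g : ℝ → ℂ) (xp xm : ℝ → ℝ) (t : ℝ) : ℝ :=
  ∫ y in xp t..xm t, (t - (g y).im)

/-- `Im ∫_{x₊(t)}^{x₋(t)-2π} (z - g(y)) dy` for `Im z = t`. -/
def Bint (g : ℝ → ℂ) (xp xm : ℝ → ℝ) (t : ℝ) : ℝ :=
  ∫ y in xp t..(xm t - 2 * Real.pi), (t - (g y).im)

/-- The action `S` as a function of `t = Im z`. -/
def Sfun (g : ℝ → ℂ) (xp xm : ℝ → ℝ) (t : ℝ) : ℝ :=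
  min (Aint g xp xm t) (Bint g xp xm t)

/-- The derivative `∂_{Im z} S`, defined piecewise. -/
def Dfun (g : ℝ → ℂ) (xp xm : ℝ → ℝ) (t : ℝ) : ℝ :=
  if t ≤ (gAvg g).im then xm t - xp t else xm t - 2 * Real.pi - xp t

/-! ### Integrals over a period -/

lemma gAvg_im (g : ℝ → ℂ) (hg : Continuous g) :
    2 * Real.pi * (gAvg g).im = ∫ y in (0:ℝ)..(2 * Real.pi), (g y).im := by
  have h := Complex.imCLM.intervalIntegral_comp_comm
    (hg.intervalIntegrable (μ := volume) 0 (2 * Real.pi))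
  simp only [Complex.imCLM_apply] at h
  rw [h, gAvg, Complex.smul_im, smul_eq_mul]
  have := Real.pi_pos
  field_simp

lemma integral_period (g : ℝ → ℂ) (hg : Continuous g)
    (hper : ∀ x, g (x + 2 * Real.pi) = g x) (c : ℝ) :
    ∫ y in (c - 2 * Real.pi)..c, (g y).im = 2 * Real.pi * (gAvg g).im := by
  have hp : Function.Periodic (fun y => (g y).im) (2 * Real.pi) := fun x => by
    simp only [hper]
  have h := hp.intervalIntegral_add_eq (c - 2 * Real.pi) 0
  rw [gAvg_im g hg]
  simpa using h

lemma integral_period_sub (g : ℝ → ℂ) (hg : Continuous g)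
    (hper : ∀ x, g (x + 2 * Real.pi) = g x) (c t : ℝ) :
    ∫ y in (c - 2 * Real.pi)..c, (t - (g y).im) = 2 * Real.pi * (t - (gAvg g).im) := by
  have hc : Continuous fun y => (g y).im := Complex.continuous_im.comp hg
  rw [intervalIntegral.integral_sub (continuous_const.intervalIntegrable _ _)
    (hc.intervalIntegrable _ _), integral_period g hg hper, intervalIntegral.integral_const,
    smul_eq_mul]
  ring

/-- The two actions differ by the integral of `t - Im g` over the full period
`[x₋(t) - 2π, x₋(t)]`; no property of the turning points `x_±` is involved. -/
lemma Aint_sub_Bint (g : ℝ → ℂ) (hg : Continuous g)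
    (hper : ∀ x, g (x + 2 * Real.pi) = g x) (xp xm : ℝ → ℝ) (t : ℝ) :
    Aint g xp xm t - Bint g xp xm t = 2 * Real.pi * (t - (gAvg g).im) := by
  have hc : Continuous fun y => t - (g y).im :=
    continuous_const.sub (Complex.continuous_im.comp hg)
  rw [← integral_period_sub g hg hper (xm t) t, Aint, Bint,
    ← intervalIntegral.integral_add_adjacent_intervals
      (hc.intervalIntegrable (xm t - 2 * Real.pi) (xp t)) (hc.intervalIntegrable _ _),
    intervalIntegral.integral_symm (xm t - 2 * Real.pi) (xp t)]
  ring

/-! ### Truncated integrals -/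

/-- If `f ≤ t` on `[p, q]` and `f ≥ t` on the rest of `[c, d]`, integrating `t - f` over `[p, q]` is the same as
integrating its positive part over `[c, d]`. -/
lemma truncLow_eq {f : ℝ → ℝ} (hf : Continuous f) {c p q d t : ℝ} (hcp : c ≤ p) (hpq : p ≤ q)
    (hqd : q ≤ d) (h1 : ∀ x ∈ Icc c p, t ≤ f x) (h2 : ∀ x ∈ Icc p q, f x ≤ t)
    (h3 : ∀ x ∈ Icc q d, t ≤ f x) :
    ∫ y in c..d, max (t - f y) 0 = ∫ y in p..q, (t - f y) := by
  have hc : Continuous fun y => max (t - f y) 0 := by fun_prop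
  have e1 : ∫ y in c..p, max (t - f y) 0 = 0 := by
    rw [intervalIntegral.integral_congr (g := fun _ => (0:ℝ)), intervalIntegral.integral_zero]
    intro x hx
    rw [uIcc_of_le hcp] at hx
    exact max_eq_right (by linarith [h1 x hx])
  have e2 : ∫ y in p..q, max (t - f y) 0 = ∫ y in p..q, (t - f y) := by
    apply intervalIntegral.integral_congr
    intro x hx
    rw [uIcc_of_le hpq] at hx
    exact max_eq_left (by linarith [h2 x hx])
  have e3 : ∫ y in q..d, max (t - f y) 0 = 0 := by
    rw [intervalIntegral.integral_congr (g := fun _ => (0:ℝ)), intervalIntegral.integral_zero]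
    intro x hx
    rw [uIcc_of_le hqd] at hx
    exact max_eq_right (by linarith [h3 x hx])
  rw [← intervalIntegral.integral_add_adjacent_intervals
      (hc.intervalIntegrable c p) (hc.intervalIntegrable p d),
    ← intervalIntegral.integral_add_adjacent_intervals
      (hc.intervalIntegrable p q) (hc.intervalIntegrable q d), e1, e2, e3]
  ring

lemma truncHigh_eq {f : ℝ → ℝ} (hf : Continuous f) (c d t : ℝ) :
    ∫ y in c..d, max (f y - t) 0 = (∫ y in c..d, max (t - f y) 0) - ∫ y in c..d, (t - f y) := by
  rw [← intervalIntegral.integral_sub (Continuous.intervalIntegrable (by fun_prop) _ _)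
    (Continuous.intervalIntegrable (by fun_prop) _ _)]
  apply intervalIntegral.integral_congr
  intro x _
  simp only
  rcases le_total (f x) t with h | h
  · rw [max_eq_right (by linarith), max_eq_left (by linarith)]
    ring
  · rw [max_eq_left (by linarith), max_eq_right (by linarith)]
    ring

/-! ### Derivative of the action -/

/-- The boundary terms in the derivative cancel because `f` equals `t` at both endpoints. -/
lemma hasDerivAt_action {f : ℝ → ℝ} (hf : Continuous f) {p q : ℝ → ℝ} {t p' q' : ℝ}
    (hp : HasDerivAt p p' t) (hq : HasDerivAt q q' t) (hfp : f (p t) = t) (hfq : f (q t) = t) :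
    HasDerivAt (fun s => ∫ y in p s..q s, (s - f y)) (q t - p t) t := by
  have hF : ∀ u, HasDerivAt (fun u => ∫ y in (0:ℝ)..u, f y) (f u) u := fun u =>
    (hf.integral_hasStrictDerivAt 0 u).hasDerivAt
  have e : (fun s => ∫ y in p s..q s, (s - f y)) = fun s =>
      s * (q s - p s) - ((∫ y in (0:ℝ)..q s, f y) - ∫ y in (0:ℝ)..p s, f y) := by
    funext s
    rw [intervalIntegral.integral_sub (continuous_const.intervalIntegrable _ _)
      (hf.intervalIntegrable _ _), intervalIntegral.integral_const, smul_eq_mul,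
      intervalIntegral.integral_interval_sub_left (hf.intervalIntegrable _ _)
      (hf.intervalIntegrable _ _)]
    ring
  rw [e]
  have h := ((hasDerivAt_id t).mul (hq.sub hp)).sub
    (((hF (q t)).comp t hq).sub ((hF (p t)).comp t hp))
  refine h.congr_deriv ?_
  simp only [hfp, hfq, id, Pi.sub_apply]
  ring

lemma hasDerivAt_Aint (g : ℝ → ℂ) (hg : Continuous g) (xp xm : ℝ → ℝ) {M t : ℝ}
    (ht : t ∈ Ioo 0 M) (hm : (g (xm t)).im = t) (hp : (g (xp t)).im = t)
    (hxmC : ContDiffOn ℝ (⊤ : ℕ∞) xm (Ioo 0 M)) (hxpC : ContDiffOn ℝ (⊤ : ℕ∞) xp (Ioo 0 M)) :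
    HasDerivAt (Aint g xp xm) (xm t - xp t) t := by
  have hd : ∀ u : ℝ → ℝ, ContDiffOn ℝ (⊤ : ℕ∞) u (Ioo 0 M) → HasDerivAt u (deriv u t) t :=
    fun u hu => ((hu.contDiffAt (isOpen_Ioo.mem_nhds ht)).differentiableAt
      (by simp)).hasDerivAt
  exact hasDerivAt_action (f := fun y => (g y).im) (Complex.continuous_im.comp hg)
    (hd xp hxpC) (hd xm hxmC) hp hm

/-! ### Properties of the action -/

theorem stmt_1
    (g : ℝ → ℂ) (a b : ℝ) (xp xm : ℝ → ℝ)
    (hg : ContDiff ℝ (⊤ : ℕ∞) g) (hper : ∀ x, g (x + 2 * Real.pi) = g x)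
    (hab : a < b) (hb2 : b < a + 2 * Real.pi)
    (hga : (g a).im = 0) (hgb : 0 < (g b).im)
    (hmin : StrictMonoOn (fun x => (g x).im) (Icc a b))
    (hmax : StrictAntiOn (fun x => (g x).im) (Icc b (a + 2 * Real.pi)))
    (hcrit : ∀ x ∈ Ico a (a + 2 * Real.pi),
      deriv (fun x => (g x).im) x = 0 → x = a ∨ x = b)
    (ha'' : 0 < iteratedDeriv 2 (fun x => (g x).im) a)
    (hb'' : iteratedDeriv 2 (fun x => (g x).im) b < 0)
    (hxm : ∀ t ∈ Ioo 0 (g b).im, xm t ∈ Ioo a b ∧ (g (xm t)).im = t)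
    (hxp : ∀ t ∈ Ioo 0 (g b).im, xp t ∈ Ioo (b - 2 * Real.pi) a ∧ (g (xp t)).im = t)
    (hxmC : ContDiffOn ℝ (⊤ : ℕ∞) xm (Ioo 0 (g b).im))
    (hxpC : ContDiffOn ℝ (⊤ : ℕ∞) xp (Ioo 0 (g b).im)) :
    -- (i) continuity and continuous extension to the closed interval, vanishing at the ends
    (∃ Sbar : ℝ → ℝ, ContinuousOn Sbar (Icc 0 (g b).im) ∧
        EqOn Sbar (Sfun g xp xm) (Ioo 0 (g b).im) ∧
        Sbar 0 = 0 ∧ Sbar ((g b).im) = 0) ∧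
    -- (ii) nonnegativity
    (∀ t ∈ Ioo 0 (g b).im, 0 ≤ Sfun g xp xm t) ∧
    -- (iii) the two integrals agree at t = ⟨Im g⟩
    (Aint g xp xm (gAvg g).im = Bint g xp xm (gAvg g).im) ∧
    -- (iv) strict monotonicity on both sides of ⟨Im g⟩, maximum at ⟨Im g⟩
    StrictMonoOn (Sfun g xp xm) (Ioc 0 (gAvg g).im) ∧
    StrictAntiOn (Sfun g xp xm) (Ico (gAvg g).im ((g b).im)) ∧
    (∀ t ∈ Ioo 0 (g b).im, Sfun g xp xm t ≤ Sfun g xp xm (gAvg g).im) ∧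
    -- (v) the integral representation with piecewise-smooth density D
    (∀ t ∈ Ioo 0 (g b).im,
        Sfun g xp xm t = Sfun g xp xm (gAvg g).im + ∫ s in (gAvg g).im..t, Dfun g xp xm s) ∧
    ContDiffOn ℝ (⊤ : ℕ∞) (Dfun g xp xm) (Ioo 0 (gAvg g).im) ∧
    ContDiffOn ℝ (⊤ : ℕ∞) (Dfun g xp xm) (Ioo (gAvg g).im ((g b).im)) := by
  have hgc : Continuous g := hg.continuous
  set f : ℝ → ℝ := fun y => (g y).im with hfdef
  have hf : Continuous f := Complex.continuous_im.comp hgc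
  have hfper : ∀ x, f (x + 2 * Real.pi) = f x := fun x => by simp only [hfdef, hper]
  have hpi := Real.pi_pos
  set M : ℝ := (g b).im with hM
  set m : ℝ := (gAvg g).im with hm
  have hfa : f a = 0 := hga
  have hfb : f b = M := rfl
  -- translate of `hmax` by one period
  have hanti : AntitoneOn f (Icc (b - 2 * Real.pi) a) := by
    intro x hx y hy hxy
    rw [← hfper x, ← hfper y]
    exact hmax.antitoneOn ⟨by linarith [hx.1], by linarith [hx.2]⟩
      ⟨by linarith [hy.1], by linarith [hy.2]⟩ (by linarith)
  have hmono : MonotoneOn f (Icc a b) := hmin.monotoneOn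
  have hfb' : f (b - 2 * Real.pi) = M := by
    rw [← hfper]
    simp [hfb]
  have hrange : ∀ x ∈ Icc (b - 2 * Real.pi) b, 0 ≤ f x ∧ f x ≤ M := by
    intro x hx
    rcases le_total x a with h | h
    · exact ⟨hfa ▸ hanti ⟨hx.1, h⟩ ⟨by linarith, le_rfl⟩ h,
        hfb' ▸ hanti ⟨le_rfl, by linarith⟩ ⟨hx.1, h⟩ hx.1⟩
    · exact ⟨hfa ▸ hmono ⟨le_rfl, hab.le⟩ ⟨h, hx.2⟩ h,
        hfb ▸ hmono ⟨h, hx.2⟩ ⟨hab.le, le_rfl⟩ hx.2⟩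
  have hmean : ∫ y in (b - 2 * Real.pi)..b, f y = 2 * Real.pi * m :=
    integral_period g hgc hper b
  have hm0 : 0 < m := by
    have h : (∫ _ in (b - 2 * Real.pi)..b, (0:ℝ)) < ∫ y in (b - 2 * Real.pi)..b, f y :=
      intervalIntegral.integral_lt_integral_of_continuousOn_of_le_of_exists_lt (by linarith)
        continuousOn_const hf.continuousOn
        (fun x hx => (hrange x (Ioc_subset_Icc_self hx)).1) ⟨b, ⟨by linarith, le_rfl⟩, hgb⟩
    rw [hmean, intervalIntegral.integral_zero] at h
    exact pos_of_mul_pos_right h (by positivity)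
  have hmM : m < M := by
    have h : ∫ y in (b - 2 * Real.pi)..b, f y < ∫ _ in (b - 2 * Real.pi)..b, M :=
      intervalIntegral.integral_lt_integral_of_continuousOn_of_le_of_exists_lt (by linarith)
        hf.continuousOn continuousOn_const
        (fun x hx => (hrange x (Ioc_subset_Icc_self hx)).2)
        ⟨a, ⟨by linarith, hab.le⟩, by rw [hfa]; exact hgb⟩
    rw [hmean, intervalIntegral.integral_const, smul_eq_mul, sub_sub_cancel] at h
    exact lt_of_mul_lt_mul_left h (by positivity)
  have hmI : m ∈ Ioo 0 M := ⟨hm0, hmM⟩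
  have hAB : ∀ t, Aint g xp xm t - Bint g xp xm t = 2 * Real.pi * (t - m) :=
    Aint_sub_Bint g hgc hper xp xm
  have hSA : ∀ t ≤ m, Sfun g xp xm t = Aint g xp xm t := fun t ht => by
    refine min_eq_left ?_
    nlinarith [hAB t]
  have hSB : ∀ t, m ≤ t → Sfun g xp xm t = Bint g xp xm t := fun t ht => by
    refine min_eq_right ?_
    nlinarith [hAB t]
  have hlow : ∀ t ∈ Ioo 0 M,
      ∫ y in (b - 2 * Real.pi)..b, max (t - f y) 0 = Aint g xp xm t := by
    intro t ht
    obtain ⟨⟨hm1, hm2⟩, hm3⟩ := hxm t ht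
    obtain ⟨⟨hp1, hp2⟩, hp3⟩ := hxp t ht
    have hm3' : f (xm t) = t := hm3
    have hp3' : f (xp t) = t := hp3
    refine truncLow_eq hf hp1.le (by linarith) hm2.le ?_ ?_ ?_
    · intro x hx
      have := hanti ⟨hx.1, by linarith [hx.2]⟩ ⟨hp1.le, hp2.le⟩ hx.2
      linarith
    · intro x hx
      rcases le_total x a with h | h
      · have := hanti ⟨hp1.le, hp2.le⟩ ⟨by linarith [hx.1], h⟩ hx.1
        linarith
      · have := hmono ⟨h, by linarith [hx.2]⟩ ⟨hm1.le, hm2.le⟩ hx.2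
        linarith
    · intro x hx
      have := hmono ⟨hm1.le, hm2.le⟩ ⟨by linarith [hx.1], hx.2⟩ hx.1
      linarith
  have hhigh : ∀ t ∈ Ioo 0 M,
      ∫ y in (b - 2 * Real.pi)..b, max (f y - t) 0 = Bint g xp xm t := by
    intro t ht
    have h := integral_period_sub g hgc hper b t
    rw [truncHigh_eq hf, hlow t ht]
    linarith [hAB t]
  have hlow0 : ∀ t, 0 ≤ ∫ y in (b - 2 * Real.pi)..b, max (t - f y) 0 := fun t =>
    intervalIntegral.integral_nonneg (by linarith) fun _ _ => le_max_right _ _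
  have hhigh0 : ∀ t, 0 ≤ ∫ y in (b - 2 * Real.pi)..b, max (f y - t) 0 := fun t =>
    intervalIntegral.integral_nonneg (by linarith) fun _ _ => le_max_right _ _
  have hDA : ∀ t ∈ Ioo 0 M, HasDerivAt (Aint g xp xm) (xm t - xp t) t := fun t ht =>
    hasDerivAt_Aint g hgc xp xm ht (hxm t ht).2 (hxp t ht).2 hxmC hxpC
  have hDB : ∀ t ∈ Ioo 0 M, HasDerivAt (Bint g xp xm) (xm t - 2 * Real.pi - xp t) t := by
    intro t ht
    have e : Bint g xp xm = fun s => Aint g xp xm s - 2 * Real.pi * (s - m) := by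
      funext s
      linarith [hAB s]
    rw [e]
    refine ((hDA t ht).sub (((hasDerivAt_id t).sub_const m).const_mul (2 * Real.pi))).congr_deriv
      ?_
    ring
  have hmonoS : StrictMonoOn (Sfun g xp xm) (Ioc 0 m) := by
    have h : StrictMonoOn (Aint g xp xm) (Ioc 0 m) := by
      apply strictMonoOn_of_deriv_pos (convex_Ioc 0 m)
      · exact fun t ht => (hDA t ⟨ht.1, ht.2.trans_lt hmM⟩).continuousAt.continuousWithinAt
      · intro t ht
        rw [interior_Ioc] at ht
        have ht' : t ∈ Ioo 0 M := ⟨ht.1, ht.2.trans hmM⟩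
        rw [(hDA t ht').deriv]
        linarith [(hxm t ht').1.1, (hxp t ht').1.2]
    exact h.congr fun t ht => (hSA t ht.2).symm
  have hantiS : StrictAntiOn (Sfun g xp xm) (Ico m M) := by
    have h : StrictAntiOn (Bint g xp xm) (Ico m M) := by
      apply strictAntiOn_of_deriv_neg (convex_Ico m M)
      · exact fun t ht => (hDB t ⟨hm0.trans_le ht.1, ht.2⟩).continuousAt.continuousWithinAt
      · intro t ht
        rw [interior_Ico] at ht
        have ht' : t ∈ Ioo 0 M := ⟨hm0.trans ht.1, ht.2⟩
        rw [(hDB t ht').deriv]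
        linarith [(hxm t ht').1.2, (hxp t ht').1.1]
    exact h.congr fun t ht => (hSB t ht.1).symm
  refine ⟨⟨fun t => min (∫ y in (b - 2 * Real.pi)..b, max (t - f y) 0)
      (∫ y in (b - 2 * Real.pi)..b, max (f y - t) 0), ?_, ?_, ?_, ?_⟩, ?_, ?_, hmonoS, hantiS,
      ?_, ?_, ?_, ?_⟩
  · refine Continuous.continuousOn (Continuous.min ?_ ?_)
    · exact intervalIntegral.continuous_parametric_intervalIntegral_of_continuous'
        (by fun_prop) _ _
    · exact intervalIntegral.continuous_parametric_intervalIntegral_of_continuous'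
        (by fun_prop) _ _
  · intro t ht
    simp only [hlow t ht, hhigh t ht, Sfun]
  · -- at `t = 0` the lower truncation vanishes since `f ≥ 0`
    have h : ∫ y in (b - 2 * Real.pi)..b, max (0 - f y) 0 = 0 := by
      rw [intervalIntegral.integral_congr (g := fun _ => (0:ℝ)), intervalIntegral.integral_zero]
      intro x hx
      rw [uIcc_of_le (by linarith)] at hx
      exact max_eq_right (by linarith [(hrange x hx).1])
    simp only [h]
    exact min_eq_left (hhigh0 0)
  · -- at `t = M` the upper truncation vanishes since `f ≤ M`
    have h : ∫ y in (b - 2 * Real.pi)..b, max (f y - M) 0 = 0 := by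
      rw [intervalIntegral.integral_congr (g := fun _ => (0:ℝ)), intervalIntegral.integral_zero]
      intro x hx
      rw [uIcc_of_le (by linarith)] at hx
      exact max_eq_right (by linarith [(hrange x hx).2])
    simp only [h]
    exact min_eq_right (hlow0 M)
  · intro t ht
    rw [Sfun, ← hlow t ht, ← hhigh t ht]
    exact le_min (hlow0 t) (hhigh0 t)
  · have h := hAB m
    rw [sub_self, mul_zero] at h
    exact sub_eq_zero.mp h
  · intro t ht
    rcases le_total t m with h | h
    · exact hmonoS.monotoneOn ⟨ht.1, h⟩ ⟨hm0, le_rfl⟩ h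
    · exact hantiS.antitoneOn ⟨le_rfl, hmM⟩ ⟨h, ht.2⟩ h
  · intro t ht
    have hsub : uIcc m t ⊆ Ioo 0 M := ordConnected_Ioo.uIcc_subset hmI ht
    rcases le_total t m with h | h
    · have e : ∫ s in m..t, Dfun g xp xm s = ∫ s in m..t, (xm s - xp s) := by
        apply intervalIntegral.integral_congr
        intro s hs
        rw [uIcc_of_ge h] at hs
        exact if_pos hs.2
      have hint : IntervalIntegrable (fun s => xm s - xp s) volume m t :=
        ((hxmC.continuousOn.sub hxpC.continuousOn).mono hsub).intervalIntegrable
      rw [e, intervalIntegral.integral_eq_sub_of_hasDerivAt (fun s hs => hDA s (hsub hs)) hint,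
        hSA t h, hSA m le_rfl]
      ring
    · -- `D` takes its left-hand value at `s = m`, so only the open interval is used
      have e : ∫ s in m..t, Dfun g xp xm s = ∫ s in m..t, (xm s - 2 * Real.pi - xp s) := by
        apply intervalIntegral.integral_congr_Ioo_of_le h
        intro s hs
        exact if_neg (not_le.mpr hs.1)
      have hint : IntervalIntegrable (fun s => xm s - 2 * Real.pi - xp s) volume m t :=
        (((hxmC.continuousOn.sub continuousOn_const).sub hxpC.continuousOn).mono
          hsub).intervalIntegrable
      rw [e, intervalIntegral.integral_eq_sub_of_hasDerivAt (fun s hs => hDB s (hsub hs)) hint,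
        hSB t h, hSB m le_rfl]
      ring
  · exact ((hxmC.sub hxpC).mono (Ioo_subset_Ioo_right hmM.le)).congr
      fun s hs => if_pos hs.2.le
  · exact (((hxmC.sub contDiffOn_const).sub hxpC).mono (Ioo_subset_Ioo_left hm0.le)).congr
      fun s hs => if_neg (not_le.mpr hs.1)

end
end

section
/- There exists a constant C ≥ 1, depending only on g, such that for every z in the open strip {0 < Im z < Im g(b)}: C^{−1} d(z)^{3/2} ≤ S(z) ≤ C d(z)^{3/2}, and C^{−1} d(z)^{1/2} ≤ |∂_{Im z}S(z)| ≤ C d(z)^{1/2}, where ∂_{Im z}S(z) = x₋(z) − x₊(z) for Im z ≤ ⟨Im g⟩ and ∂_{Im z}S(z) = x₋(z) − 2π − x₊(z) for Im z > ⟨Im g⟩. -/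
/-!
Write `f = Im g` and `M = f b`.

* Near a nondegenerate zero minimum `a` of a function `f` that is positive elsewhere on a compact
  interval, `f x / (x - a)^2` extends continuously by `f''(a) / 2 > 0`, hence it lies between two
  positive constants (`quadratic_well`).
* Consequently a sublevel interval `[p, q]` at height `t` has length comparable to `t^{1/2}`, and
  the area `∫_p^q (t - f)` is comparable to `t^{3/2}`: it is at most `t * (q - p)`, and on an
  interval of length comparable to `t^{1/2}` around `a` one has `t - f ≥ t / 2` (`well_bounds`).

Applied to `f` around `a` this gives the first integral `≈ t^{3/2}` and `x₋ - x₊ ≈ t^{1/2}` for all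
`t` in `(0, M)`. Applied to `M - f` around `b - 2π` it gives the second integral `≈ (M - t)^{3/2}`
and `x₊ - (x₋ - 2π) ≈ (M - t)^{1/2}`. Taking minima yields the bounds on `S` directly. For the
derivative, the strict inequalities `0 < ⟨Im g⟩ < M` show that `t` is comparable to `d` when
`t ≤ ⟨Im g⟩` and that `M - t` is comparable to `d` when `t > ⟨Im g⟩`.
-/

open Set MeasureTheory

noncomputable section

/-- A function with a nondegenerate minimum of value `0` at `a`, positive elsewhere on `[l, r]`, is
bounded above and below on `[l, r]` by positive multiples of `(x - a)^2`. -/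
lemma quadratic_well (f : ℝ → ℝ) (l a r : ℝ) (hf : ContDiff ℝ 2 f) (hla : l < a) (har : a < r)
    (h0 : f a = 0) (hpos : ∀ x ∈ Icc l r, x ≠ a → 0 < f x) (h2 : 0 < iteratedDeriv 2 f a) :
    ∃ c C : ℝ, 0 < c ∧ 0 < C ∧
      ∀ x ∈ Icc l r, c * (x - a) ^ 2 ≤ f x ∧ f x ≤ C * (x - a) ^ 2 := by
  have hloc : IsLocalMin f a := by
    filter_upwards [Icc_mem_nhds hla har] with x hx
    rcases eq_or_ne x a with rfl | hxa
    · exact le_rfl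
    · rw [h0]; exact (hpos x hx hxa).le
  have h1 : deriv f a = 0 := hloc.deriv_eq_zero
  have htay := Real.taylor_tendsto (f := f) (x₀ := a) (n := 2) (s := univ) convex_univ (mem_univ a)
    hf.contDiffOn
  rw [nhdsWithin_univ] at htay
  have hlim : Filter.Tendsto (fun x => f x / (x - a) ^ 2) (nhdsWithin a {a}ᶜ)
      (nhds (iteratedDeriv 2 f a / 2)) := by
    have := (htay.mono_left (nhdsWithin_le_nhds (s := {a}ᶜ))).add_const (iteratedDeriv 2 f a / 2)
    rw [zero_add] at this
    refine this.congr' ?_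
    filter_upwards [self_mem_nhdsWithin] with x hx
    have hx' : x - a ≠ 0 := sub_ne_zero.2 hx
    simp only [taylorWithinEval_succ, taylor_within_zero_eval, iteratedDerivWithin_univ,
      iteratedDeriv_one, h0, h1, smul_eq_mul, zero_add]
    norm_num
    field_simp
    ring
  -- the quotient `f x / (x - a)^2`, extended continuously to `a`
  set h : ℝ → ℝ := Function.update (fun x => f x / (x - a) ^ 2) a (iteratedDeriv 2 f a / 2) with hh
  have hcont : Continuous h := by
    rw [continuous_iff_continuousAt]
    intro x
    rcases eq_or_ne x a with rfl | hxa
    · exact continuousAt_update_same.2 hlim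
    · refine (continuousAt_update_of_ne hxa).2 ?_
      exact hf.continuous.continuousAt.div (by fun_prop) (pow_ne_zero 2 (sub_ne_zero.2 hxa))
  have hhpos : ∀ x ∈ Icc l r, 0 < h x := by
    intro x hx
    rcases eq_or_ne x a with rfl | hxa
    · simp only [hh, Function.update_self]; positivity
    · simp only [hh, Function.update_of_ne hxa]
      have := hpos x hx hxa
      have hx' : x - a ≠ 0 := sub_ne_zero.2 hxa
      positivity
  have hfh : ∀ x, f x = h x * (x - a) ^ 2 := by
    intro x
    rcases eq_or_ne x a with rfl | hxa
    · simp [h0]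
    · simp only [hh, Function.update_of_ne hxa]
      have hx' : x - a ≠ 0 := sub_ne_zero.2 hxa
      field_simp
  have hne : (Icc l r).Nonempty := ⟨a, hla.le, har.le⟩
  obtain ⟨u, hu, humin⟩ := isCompact_Icc.exists_isMinOn hne hcont.continuousOn
  obtain ⟨v, hv, hvmax⟩ := isCompact_Icc.exists_isMaxOn hne hcont.continuousOn
  refine ⟨h u, h v, hhpos u hu, hhpos v hv, fun x hx => ?_⟩
  rw [hfh x]
  exact ⟨mul_le_mul_of_nonneg_right (humin hx) (sq_nonneg _),
    mul_le_mul_of_nonneg_right (hvmax hx) (sq_nonneg _)⟩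

/-- Length and area of the sublevel intervals `[p, q]` of a nondegenerate well, with a constant
independent of the height `t`. -/
lemma well_bounds (f : ℝ → ℝ) (l a r : ℝ) (hf : ContDiff ℝ 2 f) (hla : l < a) (har : a < r)
    (h0 : f a = 0) (hpos : ∀ x ∈ Icc l r, x ≠ a → 0 < f x) (h2 : 0 < iteratedDeriv 2 f a) :
    ∃ K : ℝ, 1 ≤ K ∧ ∀ t p q : ℝ, 0 < t → p ∈ Icc l a → q ∈ Icc a r → f p = t → f q = t →
      (∀ x ∈ Icc p q, f x ≤ t) →
      (√t ≤ K * (q - p) ∧ q - p ≤ K * √t) ∧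
      (t * √t ≤ K * ∫ y in p..q, (t - f y)) ∧ (∫ y in p..q, (t - f y)) ≤ K * (t * √t) := by
  obtain ⟨c, C, hc, hC, hq⟩ := quadratic_well f l a r hf hla har h0 hpos h2
  have hcont := hf.continuous
  set k := √c with hk
  set m := √(2 * C) with hm
  have hk0 : 0 < k := Real.sqrt_pos.2 hc
  have hm0 : 0 < m := Real.sqrt_pos.2 (by positivity)
  have hk2 : k ^ 2 = c := Real.sq_sqrt hc.le
  have hm2 : m ^ 2 = 2 * C := Real.sq_sqrt (by positivity)
  have hki : 0 < 2 / k := by positivity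
  refine ⟨1 + 2 / k + m, by linarith, ?_⟩
  intro t p q ht hp hqm hfp hfq hle
  set σ := √t with hσ
  have hσ0 : 0 < σ := Real.sqrt_pos.2 ht
  have hσ2 : σ ^ 2 = t := Real.sq_sqrt ht.le
  obtain ⟨hp1, hp2⟩ := hq p ⟨hp.1, hp.2.trans har.le⟩
  obtain ⟨hq1, hq2⟩ := hq q ⟨hla.le.trans hqm.1, hqm.2⟩
  rw [hfp, ← hσ2, sub_sq_comm p a] at hp1 hp2
  rw [hfq, ← hσ2] at hq1 hq2
  have ep := hp.2
  have eq' := hqm.1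
  have up1 : k * (a - p) ≤ σ := by
    refine (sq_le_sq₀ (mul_nonneg hk0.le (by linarith)) hσ0.le).1 ?_
    rw [mul_pow, hk2]; linarith
  have up2 : k * (q - a) ≤ σ := by
    refine (sq_le_sq₀ (mul_nonneg hk0.le (by linarith)) hσ0.le).1 ?_
    rw [mul_pow, hk2]; linarith
  have lo1 : σ ≤ m * (a - p) := by
    refine (sq_le_sq₀ hσ0.le (mul_nonneg hm0.le (by linarith))).1 ?_
    rw [mul_pow, hm2]
    linarith [mul_nonneg hC.le (sq_nonneg (a - p))]
  have lo2 : σ ≤ m * (q - a) := by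
    refine (sq_le_sq₀ hσ0.le (mul_nonneg hm0.le (by linarith))).1 ?_
    rw [mul_pow, hm2]
    linarith [mul_nonneg hC.le (sq_nonneg (q - a))]
  have hpq : p ≤ q := by linarith
  have hlen : q - p ≤ 2 / k * σ := by
    rw [div_mul_eq_mul_div, le_div_iff₀ hk0]; linarith
  have hlen' : q - p ≤ (1 + 2 / k + m) * σ := by
    linarith [mul_pos hm0 hσ0]
  have hint : ∀ u v : ℝ, IntervalIntegrable (fun y => t - f y) volume u v := fun u v =>
    (by fun_prop : Continuous fun y => t - f y).intervalIntegrable u v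
  refine ⟨⟨?_, hlen'⟩, ?_, ?_⟩
  · linarith [mul_nonneg hki.le (sub_nonneg.2 hpq), mul_nonneg hm0.le (sub_nonneg.2 ep)]
  · -- on `[a - s, a + s]` the quadratic upper bound gives `f ≤ t / 2`
    set s := σ / m with hs
    have hs0 : 0 < s := by positivity
    have hsm : m * s = σ := by rw [hs]; field_simp
    have s1 : p ≤ a - s := by
      have : s ≤ a - p := by rw [hs, div_le_iff₀ hm0]; linarith
      linarith
    have s2 : a + s ≤ q := by
      have : s ≤ q - a := by rw [hs, div_le_iff₀ hm0]; linarith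
      linarith
    have i1 : ∫ y in (a - s)..(a + s), (t - f y) ≤ ∫ y in p..q, (t - f y) := by
      refine intervalIntegral.integral_mono_interval s1 (by linarith) s2 ?_ (hint p q)
      refine (ae_restrict_iff' measurableSet_Ioc).2 (Filter.Eventually.of_forall fun y hy => ?_)
      exact sub_nonneg.2 (hle y ⟨hy.1.le, hy.2⟩)
    have i2 : ∫ y in (a - s)..(a + s), (t / 2) ≤ ∫ y in (a - s)..(a + s), (t - f y) := by
      refine intervalIntegral.integral_mono_on (by linarith) (by simp) (hint _ _) ?_
      intro y hy
      have hy2 := (hq y ⟨by linarith [hy.1, hp.1], by linarith [hy.2, hqm.2]⟩).2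
      have hys : (y - a) ^ 2 ≤ s ^ 2 :=
        sq_le_sq' (by linarith [hy.1]) (by linarith [hy.2])
      have : C * s ^ 2 = t / 2 := by rw [← hσ2, ← hsm, mul_pow, hm2]; ring
      linarith [mul_le_mul_of_nonneg_left hys hC.le]
    rw [intervalIntegral.integral_const, smul_eq_mul] at i2
    have i3 : s * t ≤ ∫ y in p..q, (t - f y) := by linarith
    have i4 : 0 ≤ ∫ y in p..q, (t - f y) := le_trans (by positivity) i3
    have i5 : m * (s * t) = t * σ := by rw [← hsm]; ring
    linarith [mul_le_mul_of_nonneg_left i3 hm0.le, mul_nonneg hki.le i4]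
  · have i1 : ∫ y in p..q, (t - f y) ≤ ∫ y in p..q, t := by
      refine intervalIntegral.integral_mono_on hpq (hint _ _) (by simp) ?_
      intro y hy
      have hfy : 0 ≤ f y := le_trans (by positivity)
        (hq y ⟨hp.1.trans hy.1, hy.2.trans hqm.2⟩).1
      linarith
    rw [intervalIntegral.integral_const, smul_eq_mul] at i1
    linarith [mul_le_mul_of_nonneg_right hlen' ht.le]

lemma rpow_three_halves {d : ℝ} (hd : 0 < d) : d ^ ((3:ℝ)/2) = d * √d := by
  rw [show ((3:ℝ)/2) = 1 + 1/2 by norm_num, Real.rpow_add hd, Real.rpow_one, Real.sqrt_eq_rpow]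

set_option maxHeartbeats 1000000 in
theorem stmt_2
    (g : ℝ → ℂ) (a b : ℝ) (xp xm : ℝ → ℝ)
    (hg : ContDiff ℝ (⊤ : ℕ∞) g) (hper : ∀ x, g (x + 2 * Real.pi) = g x)
    (hab : a < b) (hb2 : b < a + 2 * Real.pi)
    (hga : (g a).im = 0) (hgb : 0 < (g b).im)
    (hmin : StrictMonoOn (fun x => (g x).im) (Icc a b))
    (hmax : StrictAntiOn (fun x => (g x).im) (Icc b (a + 2 * Real.pi)))
    (hcrit : ∀ x ∈ Ico a (a + 2 * Real.pi),
      deriv (fun x => (g x).im) x = 0 → x = a ∨ x = b)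
    (ha'' : 0 < iteratedDeriv 2 (fun x => (g x).im) a)
    (hb'' : iteratedDeriv 2 (fun x => (g x).im) b < 0)
    (hxm : ∀ t ∈ Ioo 0 (g b).im, xm t ∈ Ioo a b ∧ (g (xm t)).im = t)
    (hxp : ∀ t ∈ Ioo 0 (g b).im, xp t ∈ Ioo (b - 2 * Real.pi) a ∧ (g (xp t)).im = t) :
    ∃ C : ℝ, 1 ≤ C ∧ ∀ t ∈ Ioo 0 (g b).im,
      (C⁻¹ * (min t ((g b).im - t)) ^ ((3:ℝ)/2) ≤ Sfun g xp xm t ∧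
        Sfun g xp xm t ≤ C * (min t ((g b).im - t)) ^ ((3:ℝ)/2)) ∧
      (C⁻¹ * (min t ((g b).im - t)) ^ ((1:ℝ)/2) ≤ |Dfun g xp xm t| ∧
        |Dfun g xp xm t| ≤ C * (min t ((g b).im - t)) ^ ((1:ℝ)/2)) := by
  set f : ℝ → ℝ := fun x => (g x).im with hfdef
  set M := (g b).im with hM
  set T := 2 * Real.pi with hT
  have hT0 : 0 < T := Real.two_pi_pos
  have hfs : ContDiff ℝ 2 f := Complex.imCLM.contDiff.comp (hg.of_le (WithTop.coe_le_coe.2 (le_top : (2 : ℕ∞) ≤ ⊤)))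
  have hfc : Continuous f := hfs.continuous
  have hfp : ∀ x, f (x + T) = f x := fun x => by simp only [hfdef, hper]
  have hfa : f a = 0 := hga
  have hfb : f b = M := rfl
  -- monotonicity on the three half-periods in `[a - 2π, b]`
  have mono2 : ∀ x ∈ Icc (b - T) a, ∀ y ∈ Icc (b - T) a, x < y → f y < f x := by
    intro x hx y hy hxy
    rw [← hfp x, ← hfp y]
    exact hmax ⟨by linarith [hx.1], by linarith [hx.2]⟩ ⟨by linarith [hy.1], by linarith [hy.2]⟩
      (by linarith)
  have mono3 : ∀ x ∈ Icc (a - T) (b - T), ∀ y ∈ Icc (a - T) (b - T), x < y → f x < f y := by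
    intro x hx y hy hxy
    rw [← hfp x, ← hfp y]
    exact hmin ⟨by linarith [hx.1], by linarith [hx.2]⟩ ⟨by linarith [hy.1], by linarith [hy.2]⟩
      (by linarith)
  have mono1 : ∀ x ∈ Icc a b, ∀ y ∈ Icc a b, x < y → f x < f y :=
    fun x hx y hy hxy => hmin hx hy hxy
  have hfbT : f (b - T) = M := by rw [← hfp (b - T), sub_add_cancel]
  have posA : ∀ x ∈ Icc (b - T) b, x ≠ a → 0 < f x := by
    intro x hx hxa
    rw [← hfa]
    rcases lt_or_gt_of_ne hxa with h | h
    · exact mono2 x ⟨hx.1, h.le⟩ a ⟨by linarith, le_rfl⟩ h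
    · exact mono1 a ⟨le_rfl, hab.le⟩ x ⟨h.le, hx.2⟩ h
  have posB : ∀ x ∈ Icc (a - T) a, x ≠ b - T → 0 < M - f x := by
    intro x hx hxa
    rw [← hfbT, sub_pos]
    rcases lt_or_gt_of_ne hxa with h | h
    · exact mono3 x ⟨hx.1, h.le⟩ (b - T) ⟨by linarith, le_rfl⟩ h
    · exact mono2 (b - T) ⟨le_rfl, by linarith⟩ x ⟨h.le, hx.2⟩ h
  have hcurv : 0 < iteratedDeriv 2 (fun x => M - f x) (b - T) := by
    have e : iteratedDeriv 2 f (b - T) = iteratedDeriv 2 f b := by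
      have h := congrFun (iteratedDeriv_comp_add_const 2 f T) (b - T)
      rw [show (fun z => f (z + T)) = f from funext hfp, sub_add_cancel] at h
      exact h
    have e2 : iteratedDeriv 2 (fun x => M - f x) (b - T) = - iteratedDeriv 2 f (b - T) := by
      rw [iteratedDeriv_const_sub (by norm_num), iteratedDeriv_neg]
    rw [e2, e]; linarith
  obtain ⟨K₁, hK₁, H₁⟩ := well_bounds f (b - T) a b hfs (by linarith) hab hfa posA ha''
  obtain ⟨K₂, hK₂, H₂⟩ := well_bounds (fun x => M - f x) (a - T) (b - T) a
    (contDiff_const.sub hfs) (by linarith) (by linarith) (by simp only [hfbT, sub_self]) posB hcurv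
  set m := (gAvg g).im with hm
  have hper' : ∫ y in (0:ℝ)..T, f y = ∫ y in a..(a + T), f y := by
    have := (show Function.Periodic f T from hfp).intervalIntegral_add_eq 0 a
    rwa [zero_add] at this
  have hmT : T * m = ∫ y in a..(a + T), f y := by
    rw [← hper', hm, gAvg, Complex.smul_im, smul_eq_mul, ← mul_assoc, mul_inv_cancel₀ hT0.ne',
      one_mul]
    exact (Complex.imCLM.intervalIntegral_comp_comm (hg.continuous.intervalIntegrable _ _)).symm
  have hm0 : 0 < m := by
    have : 0 < ∫ y in a..(a + T), f y := by
      refine intervalIntegral.intervalIntegral_pos_of_pos_on (hfc.intervalIntegrable _ _) ?_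
        (by linarith)
      intro x hx
      rcases le_or_gt x b with h | h
      · exact posA x ⟨by linarith [hx.1], h⟩ hx.1.ne'
      · rw [← sub_add_cancel x T, hfp]
        exact posA _ ⟨by linarith, by linarith [hx.2]⟩ (by linarith [hx.2] : x - T < a).ne
    rw [← hmT] at this
    exact pos_of_mul_pos_right this hT0.le
  have hmM : m < M := by
    have hshift : ∫ y in a..(a + T), f y = ∫ y in (b - T)..(b - T + T), f y :=
      (show Function.Periodic f T from hfp).intervalIntegral_add_eq a (b - T)
    have : 0 < ∫ y in (b - T)..(b - T + T), (M - f y) := by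
      refine intervalIntegral.intervalIntegral_pos_of_pos_on
        ((by fun_prop : Continuous fun y => M - f y).intervalIntegrable _ _) ?_ (by linarith)
      intro x hx
      rcases le_or_gt x a with h | h
      · exact posB x ⟨by linarith [hx.1], h⟩ hx.1.ne'
      · rw [← sub_add_cancel x T, hfp]
        exact posB _ ⟨by linarith, by linarith [hx.2]⟩ (by linarith [hx.2] : x - T < b - T).ne
    rw [intervalIntegral.integral_sub (by simp) (hfc.intervalIntegrable _ _), ← hshift, ← hmT,
      intervalIntegral.integral_const, smul_eq_mul, add_sub_cancel_left, ← mul_sub] at this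
    exact sub_pos.1 (pos_of_mul_pos_right this hT0.le)
  -- `R₁` and `R₂` compare `√t`, resp. `√(M - t)`, with `√d` on the two sides of the mean
  set R₁ := √(M / (M - m)) with hR₁
  set R₂ := √(M / m) with hR₂
  have hMm : 0 < M - m := sub_pos.2 hmM
  have one1 : 1 ≤ M / (M - m) := by rw [le_div_iff₀ hMm]; linarith
  have one2 : 1 ≤ M / m := by rw [le_div_iff₀ hm0]; linarith
  have hR₁1 : 1 ≤ R₁ := Real.one_le_sqrt.2 one1
  have hR₂1 : 1 ≤ R₂ := Real.one_le_sqrt.2 one2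
  set K := max (K₁ * R₁) (K₂ * R₂) with hK
  have hKK₁ : K₁ ≤ K := le_trans (le_mul_of_one_le_right (by linarith) hR₁1) (le_max_left _ _)
  have hKK₂ : K₂ ≤ K := le_trans (le_mul_of_one_le_right (by linarith) hR₂1) (le_max_right _ _)
  have hK1 : 1 ≤ K := hK₁.trans hKK₁
  have hK0 : 0 < K := by linarith
  refine ⟨K, hK1, ?_⟩
  intro t ht
  obtain ⟨⟨xm1, xm2⟩, hxmt⟩ := hxm t ht
  obtain ⟨⟨xp1, xp2⟩, hxpt⟩ := hxp t ht
  change f (xm t) = t at hxmt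
  change f (xp t) = t at hxpt
  obtain ⟨ht0, htM⟩ := ht
  have htM' : 0 < M - t := sub_pos.2 htM
  have hxmT : f (xm t - T) = t := by rw [← hfp, sub_add_cancel, hxmt]
  obtain ⟨⟨L1, L2⟩, A1, A2⟩ := H₁ t (xp t) (xm t) ht0 ⟨xp1.le, xp2.le⟩ ⟨xm1.le, xm2.le⟩ hxpt hxmt
    (by
      intro x hx
      rcases le_or_gt x a with h | h
      · rcases hx.1.eq_or_lt with h' | h'
        · rw [← h', hxpt]
        · exact (mono2 _ ⟨xp1.le, xp2.le⟩ x ⟨xp1.le.trans hx.1, h⟩ h').le.trans hxpt.le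
      · rcases hx.2.eq_or_lt with h' | h'
        · rw [h', hxmt]
        · exact (mono1 x ⟨h.le, hx.2.trans xm2.le⟩ _ ⟨xm1.le, xm2.le⟩ h').le.trans hxmt.le)
  obtain ⟨⟨L3, L4⟩, B1, B2⟩ := H₂ (M - t) (xm t - T) (xp t) htM' ⟨by linarith, by linarith⟩
    ⟨xp1.le, xp2.le⟩ (by simp only [hxmT]) (by simp only [hxpt])
    (by
      intro x hx
      apply sub_le_sub_left
      rcases le_or_gt x (b - T) with h | h
      · rcases hx.1.eq_or_lt with h' | h'
        · rw [← h', hxmT]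
        · exact hxmT.ge.trans (mono3 _ ⟨by linarith, by linarith⟩ x
            ⟨by linarith [hx.1], h⟩ h').le
      · rcases hx.2.eq_or_lt with h' | h'
        · rw [h', hxpt]
        · exact hxpt.ge.trans (mono2 x ⟨h.le, by linarith [hx.2]⟩ _ ⟨xp1.le, xp2.le⟩ h').le)
  have hB : (∫ y in (xm t - T)..(xp t), (M - t - (M - f y))) = Bint g xp xm t := by
    rw [Bint, intervalIntegral.integral_symm, ← intervalIntegral.integral_neg]
    refine intervalIntegral.integral_congr fun y _ => ?_
    simp only [hfdef]; ring
  have hA : (∫ y in (xp t)..(xm t), (t - f y)) = Aint g xp xm t := rfl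
  simp only [hB] at B1 B2
  rw [hA] at A1 A2
  set d := min t (M - t) with hd
  have hd0 : 0 < d := lt_min ht0 htM'
  have hdt : d ≤ t := min_le_left _ _
  have hdM : d ≤ M - t := min_le_right _ _
  have sdt : √d ≤ √t := Real.sqrt_le_sqrt hdt
  have sdM : √d ≤ √(M - t) := Real.sqrt_le_sqrt hdM
  have sd0 : 0 ≤ √d := Real.sqrt_nonneg d
  have prodt : d * √d ≤ t * √t := mul_le_mul hdt sdt sd0 ht0.le
  have prodM : d * √d ≤ (M - t) * √(M - t) := mul_le_mul hdM sdM sd0 htM'.le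
  rw [rpow_three_halves hd0, ← Real.sqrt_eq_rpow, inv_mul_le_iff₀ hK0, inv_mul_le_iff₀ hK0]
  have pt : 0 < t * √t := mul_pos ht0 (Real.sqrt_pos.2 ht0)
  have pM : 0 < (M - t) * √(M - t) := mul_pos htM' (Real.sqrt_pos.2 htM')
  have hA0 : 0 < Aint g xp xm t := pos_of_mul_pos_right (pt.trans_le A1) (by linarith)
  have hB0 : 0 < Bint g xp xm t := pos_of_mul_pos_right (pM.trans_le B1) (by linarith)
  refine ⟨⟨?_, ?_⟩, ?_⟩
  · rw [Sfun, mul_min_of_nonneg _ _ hK0.le]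
    exact le_min ((prodt.trans A1).trans (mul_le_mul_of_nonneg_right hKK₁ hA0.le))
      ((prodM.trans B1).trans (mul_le_mul_of_nonneg_right hKK₂ hB0.le))
  · rcases min_choice t (M - t) with h | h
    · rw [← hd] at h
      rw [h]
      exact (min_le_left _ _).trans (A2.trans (mul_le_mul_of_nonneg_right hKK₁ pt.le))
    · rw [← hd] at h
      rw [h]
      exact (min_le_right _ _).trans (B2.trans (mul_le_mul_of_nonneg_right hKK₂ pM.le))
  · rw [Dfun]
    split_ifs with hc
    · have hc' : t ≤ m := hc
      have hD0 : 0 ≤ xm t - xp t := by linarith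
      have htd : t ≤ M / (M - m) * d := by
        rw [hd, mul_min_of_nonneg _ _ (by linarith)]
        refine le_min (le_mul_of_one_le_left ht0.le one1) ?_
        rw [div_mul_eq_mul_div, le_div_iff₀ hMm]
        exact mul_le_mul htM.le (by linarith) hMm.le hgb.le
      have hst : √t ≤ R₁ * √d := by
        rw [hR₁, ← Real.sqrt_mul (by linarith)]
        exact Real.sqrt_le_sqrt htd
      rw [abs_of_nonneg hD0]
      refine ⟨(sdt.trans L1).trans (mul_le_mul_of_nonneg_right hKK₁ hD0), L2.trans ?_⟩
      calc K₁ * √t ≤ K₁ * (R₁ * √d) := mul_le_mul_of_nonneg_left hst (by linarith)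
        _ = K₁ * R₁ * √d := by ring
        _ ≤ K * √d := mul_le_mul_of_nonneg_right (le_max_left _ _) sd0
    · have hc' : m < t := not_le.1 hc
      have hD0 : 0 ≤ xp t - (xm t - T) := by linarith
      have htd : M - t ≤ M / m * d := by
        rw [hd, mul_min_of_nonneg _ _ (by linarith)]
        refine le_min ?_ (le_mul_of_one_le_left htM'.le one2)
        rw [div_mul_eq_mul_div, le_div_iff₀ hm0]
        exact mul_le_mul (by linarith) hc'.le hm0.le hgb.le
      have hst : √(M - t) ≤ R₂ * √d := by
        rw [hR₂, ← Real.sqrt_mul (by linarith)]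
        exact Real.sqrt_le_sqrt htd
      rw [abs_sub_comm, abs_of_nonneg hD0]
      refine ⟨(sdM.trans L3).trans (mul_le_mul_of_nonneg_right hKK₂ hD0), L4.trans ?_⟩
      calc K₂ * √(M - t) ≤ K₂ * (R₂ * √d) := mul_le_mul_of_nonneg_left hst (by linarith)
        _ = K₂ * R₂ * √d := by ring
        _ ≤ K * √d := mul_le_mul_of_nonneg_right (le_max_right _ _) sd0

end
end

section
/- There exists a constant C ≥ 1, depending only on g, such that for every z in the open strip {0 < Im z < Im g(b)}: C^{−1} d(z) ≤ |Im g'(x₊(z))| · |Im g'(x₋(z))| ≤ C d(z), and C^{−1} d(z)^{−1/2} ≤ 1/(2|Im g'(x₊(z))|) + 1/(2|Im g'(x₋(z))|) ≤ C d(z)^{−1/2}. (In symbol notation with p(x,ξ) = ξ + g(x) and ρ_±(z) = (x_±(z), Re z − Re g(x_±(z))), one has {p,p̄}(ρ) = −2i Im g'(x), so (i/2){p,p̄}(ρ₊)·(i/2){p̄,p}(ρ₋) = |Im g'(x₊)||Im g'(x₋)| and i/{p,p̄}(ρ₊) + i/{p̄,p}(ρ₋) = 1/(2|Im g'(x₊)|)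 + 1/(2|Im g'(x₋)|).) -/
open Set MeasureTheory

noncomputable section

/-!
Write `f = Im g`, `M = f b` and `d = min f (M - f)`. The whole statement follows from the single
comparison `d ≤ K (f')²` and `(f')² ≤ K d` on one period: it says that `|f'(x₊)|` and `|f'(x₋)|`
are both comparable to `√d` (`comparison_algebra` draws the two displayed conclusions).

The comparison is local (`LocComp`) and passes to the period by compactness
(`exists_uniform_locComp`). At a point where both `d` and `(f')²` are positive it holds by
continuity (`locComp_of_pos`). At the minimum `a`, `d = f` nearby, and with `m = f''(a) > 0` both
`(f')² - m f` and `4 m f - (f')²` have a local minimum, equal to `0`, at `a`, because their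
derivatives `f' (2 f'' - m)` and `2 f' (2 m - f'')` have the sign of `x - a`
(`nondegenerate_min_comparison`). The maximum `b` is the same argument applied to `M - f`.
-/

open Filter Topology

/-- Near a nondegenerate minimum with value `0`, the square of the derivative is comparable to the
function. Here `D = F'` and `E = F''`. -/
theorem nondegenerate_min_comparison {F D E : ℝ → ℝ} (hF : ∀ x, HasDerivAt F (D x) x)
    (hD : ∀ x, HasDerivAt D (E x) x) (hE : Continuous E) {p : ℝ} (hFp : F p = 0)
    (hDp : D p = 0) (hEp : 0 < E p) :
    ∀ᶠ x in 𝓝 p, E p * F x ≤ D x ^ 2 ∧ D x ^ 2 ≤ 4 * E p * F x := by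
  set m := E p with hm
  have h1 : ∀ᶠ x in 𝓝 p, E x ∈ Ioo (m / 2) (2 * m) :=
    hE.continuousAt.eventually_mem (Ioo_mem_nhds (by linarith) (by linarith))
  obtain ⟨r, hr, hball⟩ := Metric.eventually_nhds_iff_ball.1 h1
  have hmem : ∀ x ∈ Ioo (p - r) (p + r), E x ∈ Ioo (m / 2) (2 * m) := fun x hx =>
    hball x (by rw [Real.ball_eq_Ioo]; exact hx)
  have hmono : StrictMonoOn D (Ioo (p - r) (p + r)) := by
    apply strictMonoOn_of_deriv_pos (convex_Ioo _ _)
    · exact fun x _ => (hD x).continuousAt.continuousWithinAt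
    · intro x hx
      rw [interior_Ioo] at hx
      rw [(hD x).deriv]
      linarith [(hmem x hx).1]
  have hp : p ∈ Ioo (p - r) (p + r) := ⟨by linarith, by linarith⟩
  have hneg : ∀ x ∈ Ioo (p - r) p, D x ≤ 0 := fun x hx => by
    have := hmono ⟨hx.1, by linarith [hx.2]⟩ hp hx.2
    linarith
  have hpos : ∀ x ∈ Ioo p (p + r), 0 ≤ D x := fun x hx => by
    have := hmono hp ⟨by linarith [hx.1], hx.2⟩ hx.1
    linarith
  have d1 : ∀ x, HasDerivAt (fun x => D x ^ 2 - m * F x) (D x * (2 * E x - m)) x := fun x => by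
    have := ((hD x).pow 2).sub ((hF x).const_mul m)
    refine this.congr_deriv ?_
    simp; ring
  have d2 : ∀ x, HasDerivAt (fun x => 4 * m * F x - D x ^ 2) (D x * (2 * (2 * m - E x))) x :=
    fun x => by
      have := ((hF x).const_mul (4 * m)).sub ((hD x).pow 2)
      refine this.congr_deriv ?_
      simp; ring
  have key : ∀ (h k : ℝ → ℝ), (∀ x, HasDerivAt h (D x * k x) x) →
      (∀ x ∈ Ioo (p - r) (p + r), 0 ≤ k x) → ∀ᶠ x in 𝓝 p, h p ≤ h x := by
    intro h k hh hk
    have : IsLocalMin h p := by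
      apply isLocalMin_of_deriv_Ioo (a := p - r) (c := p + r) (by linarith) (by linarith)
        (hh p).continuousAt
      · exact fun x _ => (hh x).differentiableAt.differentiableWithinAt
      · exact fun x _ => (hh x).differentiableAt.differentiableWithinAt
      · intro x hx
        rw [(hh x).deriv]
        exact mul_nonpos_of_nonpos_of_nonneg (hneg x hx) (hk x ⟨hx.1, by linarith [hx.2]⟩)
      · intro x hx
        rw [(hh x).deriv]
        exact mul_nonneg (hpos x hx) (hk x ⟨by linarith [hx.1], hx.2⟩)
    exact this
  filter_upwards [key _ _ d1 fun x hx => by linarith [(hmem x hx).1],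
    key _ _ d2 fun x hx => by linarith [(hmem x hx).2]] with x hx1 hx2
  simp only [hFp, hDp] at hx1 hx2
  constructor <;> linarith

/-- The functions `u` and `v` are comparable, with some constant, near `p`. -/
def LocComp (u v : ℝ → ℝ) (p : ℝ) : Prop :=
  ∃ K : ℝ, ∀ᶠ x in 𝓝 p, u x ≤ K * v x ∧ v x ≤ K * u x

theorem locComp_of_pos {u v : ℝ → ℝ} {p : ℝ} (hu : ContinuousAt u p) (hv : ContinuousAt v p)
    (hup : 0 < u p) (hvp : 0 < v p) : LocComp u v p := by
  have hq1 : ∀ᶠ x in 𝓝 p, u x / v x < u p / v p + 1 :=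
    (hu.div hv hvp.ne').eventually_lt_const (lt_add_one (u p / v p))
  have hq2 : ∀ᶠ x in 𝓝 p, v x / u x < v p / u p + 1 :=
    (hv.div hu hup.ne').eventually_lt_const (lt_add_one (v p / u p))
  refine ⟨max (u p / v p + 1) (v p / u p + 1), ?_⟩
  filter_upwards [hq1, hq2, hu.eventually_const_lt hup, hv.eventually_const_lt hvp]
    with x h1 h2 h3 h4
  exact ⟨(div_le_iff₀ h4).1 (h1.le.trans (le_max_left _ _)),
    (div_le_iff₀ h3).1 (h2.le.trans (le_max_right _ _))⟩

theorem locComp_of_nondegenerate_min {F D E u : ℝ → ℝ} (hF : ∀ x, HasDerivAt F (D x) x)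
    (hD : ∀ x, HasDerivAt D (E x) x) (hE : Continuous E) {p : ℝ} (hFp : F p = 0)
    (hDp : D p = 0) (hEp : 0 < E p) (hu : ∀ᶠ x in 𝓝 p, u x = F x) :
    LocComp u (fun x => D x ^ 2) p := by
  refine ⟨max (E p)⁻¹ (4 * E p), ?_⟩
  filter_upwards [nondegenerate_min_comparison hF hD hE hFp hDp hEp, hu] with x ⟨h1, h2⟩ h3
  rw [h3]
  have hF0 : 0 ≤ F x := by
    by_contra! h
    nlinarith
  constructor
  · calc F x = (E p)⁻¹ * (E p * F x) := by field_simp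
      _ ≤ (E p)⁻¹ * D x ^ 2 := by gcongr
      _ ≤ _ := by gcongr; exact le_max_left _ _
  · exact h2.trans (by gcongr; exact le_max_right _ _)

theorem exists_uniform_locComp {u v : ℝ → ℝ} {s : Set ℝ} (hs : IsCompact s)
    (hu : ∀ x ∈ s, 0 ≤ u x) (hv : ∀ x ∈ s, 0 ≤ v x) (h : ∀ p ∈ s, LocComp u v p) :
    ∃ K : ℝ, 1 ≤ K ∧ ∀ x ∈ s, u x ≤ K * v x ∧ v x ≤ K * u x := by
  choose! K hK using h
  obtain ⟨t, hts, hcov⟩ := hs.elim_nhds_subcover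
    (fun p => {x | u x ≤ K p * v x ∧ v x ≤ K p * u x}) hK
  obtain ⟨B, hB⟩ := (t.image K).bddAbove
  refine ⟨max 1 B, le_max_left _ _, fun x hx => ?_⟩
  obtain ⟨p, hp, hxp⟩ := mem_iUnion₂.1 (hcov hx)
  have hKB : K p ≤ max 1 B :=
    (hB (by simpa using ⟨p, hp, rfl⟩)).trans (le_max_right _ _)
  exact ⟨hxp.1.trans (mul_le_mul_of_nonneg_right hKB (hv x hx)),
    hxp.2.trans (mul_le_mul_of_nonneg_right hKB (hu x hx))⟩

theorem comparison_algebra {K d P Q : ℝ} (hK : 1 ≤ K) (hd : 0 < d) (hP : 0 ≤ P) (hQ : 0 ≤ Q)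
    (hP1 : d ≤ K * P ^ 2) (hP2 : P ^ 2 ≤ K * d) (hQ1 : d ≤ K * Q ^ 2) (hQ2 : Q ^ 2 ≤ K * d) :
    ((K ^ 2)⁻¹ * d ≤ P * Q ∧ P * Q ≤ K ^ 2 * d) ∧
    ((K ^ 2)⁻¹ * d ^ (-(1:ℝ)/2) ≤ 1 / (2 * P) + 1 / (2 * Q) ∧
      1 / (2 * P) + 1 / (2 * Q) ≤ K ^ 2 * d ^ (-(1:ℝ)/2)) := by
  have hK0 : 0 < K := by linarith
  obtain ⟨s, hs, rfl⟩ : ∃ s : ℝ, 0 < s ∧ d = s ^ 2 :=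
    ⟨√d, Real.sqrt_pos.2 hd, (Real.sq_sqrt hd.le).symm⟩
  have hrp : (s ^ 2) ^ (-(1:ℝ)/2) = s⁻¹ := by
    rw [← Real.rpow_natCast, ← Real.rpow_mul hs.le]
    norm_num [Real.rpow_neg_one]
  have hKK : K ≤ K ^ 2 := by nlinarith
  have aux : ∀ R : ℝ, 0 ≤ R → s ^ 2 ≤ K * R ^ 2 → R ^ 2 ≤ K * s ^ 2 →
      s ≤ K * R ∧ R ≤ K * s := by
    intro R hR h1 h2
    constructor
    · apply le_of_sq_le_sq _ (by positivity)
      rw [mul_pow]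
      exact h1.trans (by gcongr)
    · apply le_of_sq_le_sq _ (by positivity)
      rw [mul_pow]
      exact h2.trans (by gcongr)
  have inv : ∀ R : ℝ, 0 ≤ R → s ≤ K * R ∧ R ≤ K * s →
      K⁻¹ * s⁻¹ / 2 ≤ 1 / (2 * R) ∧ 1 / (2 * R) ≤ K * s⁻¹ / 2 := by
    rintro R hR ⟨h1, h2⟩
    have hR0 : 0 < R := by
      by_contra! h
      nlinarith
    constructor
    · rw [show K⁻¹ * s⁻¹ / 2 = 1 / (2 * (K * s)) by field_simp]
      gcongr
    · rw [show K * s⁻¹ / 2 = K / (2 * s) by field_simp, div_le_div_iff₀ (by positivity)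
        (by positivity)]
      linarith
  have hPs := aux P hP hP1 hP2
  have hQs := aux Q hQ hQ1 hQ2
  have hPi := inv P hP hPs
  have hQi := inv Q hQ hQs
  have hsi : 0 < s⁻¹ := by positivity
  rw [hrp]
  refine ⟨⟨?_, ?_⟩, ?_, ?_⟩
  · rw [inv_mul_le_iff₀ (by positivity)]
    calc s ^ 2 = s * s := sq s
      _ ≤ (K * P) * (K * Q) := mul_le_mul hPs.1 hQs.1 hs.le (by positivity)
      _ = _ := by ring
  · calc P * Q ≤ (K * s) * (K * s) := mul_le_mul hPs.2 hQs.2 hQ (by positivity)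
      _ = _ := by ring
  · have : (K ^ 2)⁻¹ * s⁻¹ ≤ K⁻¹ * s⁻¹ := by gcongr
    linarith
  · have : K * s⁻¹ ≤ K ^ 2 * s⁻¹ := by gcongr
    linarith

theorem stmt_3
    (g : ℝ → ℂ) (a b : ℝ) (xp xm : ℝ → ℝ)
    (hg : ContDiff ℝ (⊤ : ℕ∞) g) (hper : ∀ x, g (x + 2 * Real.pi) = g x)
    (hab : a < b) (hb2 : b < a + 2 * Real.pi)
    (hga : (g a).im = 0) (hgb : 0 < (g b).im)
    (hmin : StrictMonoOn (fun x => (g x).im) (Icc a b))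
    (hmax : StrictAntiOn (fun x => (g x).im) (Icc b (a + 2 * Real.pi)))
    (hcrit : ∀ x ∈ Ico a (a + 2 * Real.pi),
      deriv (fun x => (g x).im) x = 0 → x = a ∨ x = b)
    (ha'' : 0 < iteratedDeriv 2 (fun x => (g x).im) a)
    (hb'' : iteratedDeriv 2 (fun x => (g x).im) b < 0)
    (hxm : ∀ t ∈ Ioo 0 (g b).im, xm t ∈ Ioo a b ∧ (g (xm t)).im = t)
    (hxp : ∀ t ∈ Ioo 0 (g b).im, xp t ∈ Ioo (b - 2 * Real.pi) a ∧ (g (xp t)).im = t) :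
    ∃ C : ℝ, 1 ≤ C ∧ ∀ t ∈ Ioo 0 (g b).im,
      (C⁻¹ * min t ((g b).im - t) ≤ |(deriv g (xp t)).im| * |(deriv g (xm t)).im| ∧
        |(deriv g (xp t)).im| * |(deriv g (xm t)).im| ≤ C * min t ((g b).im - t)) ∧
      (C⁻¹ * (min t ((g b).im - t)) ^ (-(1:ℝ)/2) ≤
          1 / (2 * |(deriv g (xp t)).im|) + 1 / (2 * |(deriv g (xm t)).im|) ∧
        1 / (2 * |(deriv g (xp t)).im|) + 1 / (2 * |(deriv g (xm t)).im|) ≤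
          C * (min t ((g b).im - t)) ^ (-(1:ℝ)/2)) := by
  set f : ℝ → ℝ := fun x => (g x).im with hf
  set M := (g b).im with hM
  have hfs : ContDiff ℝ (⊤ : ℕ∞) f := Complex.imCLM.contDiff.comp hg
  have hf2 : ContDiff ℝ 2 f := contDiff_infty.1 hfs 2
  have hf1 : ContDiff ℝ 1 (deriv f) := by
    have : ContDiff ℝ (1 + 1) f := by simpa [one_add_one_eq_two] using hf2
    exact (contDiff_succ_iff_deriv.1 this).2.2
  have hF : ∀ x, HasDerivAt f (deriv f x) x := fun x =>
    (hf2.differentiable (by norm_num) x).hasDerivAt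
  have hD : ∀ x, HasDerivAt (deriv f) (deriv (deriv f) x) x := fun x =>
    (hf1.differentiable (by norm_num) x).hasDerivAt
  have hE : Continuous (deriv (deriv f)) := hf1.continuous_deriv le_rfl
  have hfc : Continuous f := hf2.continuous
  have hit : iteratedDeriv 2 f = deriv (deriv f) := by
    rw [iteratedDeriv_succ, iteratedDeriv_one]
  rw [hit] at ha'' hb''
  have hdg : ∀ x, (deriv g x).im = deriv f x := fun x => by
    have h1 : HasDerivAt g (deriv g x) x :=
      (hg.differentiable (by simp) x).hasDerivAt
    have h2 := Complex.imCLM.hasFDerivAt.comp_hasDerivAt x h1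
    exact (HasDerivAt.deriv h2).symm
  have hfper : ∀ x, f (x + 2 * Real.pi) = f x := fun x => by simp [hf, hper x]
  have hdper : ∀ x, deriv f (x + 2 * Real.pi) = deriv f x := fun x => by
    rw [← deriv_comp_add_const, funext hfper]
  have hfa : f a = 0 := hga
  have hfb : f b = M := rfl
  have hfa' : f (a + 2 * Real.pi) = 0 := by rw [hfper, hfa]
  -- the range of `f`
  have hint : ∀ x ∈ Ioo a (a + 2 * Real.pi), x ≠ b → 0 < f x ∧ f x < M := by
    intro x hx hxb
    rcases lt_or_gt_of_ne hxb with h | h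
    · have h1 := hmin (left_mem_Icc.2 hab.le) ⟨hx.1.le, h.le⟩ hx.1
      have h2 := hmin ⟨hx.1.le, h.le⟩ (right_mem_Icc.2 hab.le) h
      exact ⟨hfa ▸ h1, h2⟩
    · have h1 := hmax (left_mem_Icc.2 hb2.le) ⟨h.le, hx.2.le⟩ h
      have h2 := hmax ⟨h.le, hx.2.le⟩ (right_mem_Icc.2 hb2.le) hx.2
      exact ⟨hfa' ▸ h2, h1⟩
  have hrange : ∀ x ∈ Icc a (a + 2 * Real.pi), 0 ≤ f x ∧ f x ≤ M := by
    intro x hx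
    by_cases h1 : x = a
    · subst h1; rw [hfa]; exact ⟨le_rfl, hgb.le⟩
    by_cases h2 : x = a + 2 * Real.pi
    · rw [h2, hfa']; exact ⟨le_rfl, hgb.le⟩
    by_cases h3 : x = b
    · rw [h3, hfb]; exact ⟨hgb.le, le_rfl⟩
    have := hint x ⟨lt_of_le_of_ne hx.1 (Ne.symm h1), lt_of_le_of_ne hx.2 h2⟩ h3
    exact ⟨this.1.le, this.2.le⟩
  have hDb : deriv f b = 0 := by
    apply IsLocalMax.deriv_eq_zero
    filter_upwards [Icc_mem_nhds hab hb2] with x hx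
    exact (hrange x hx).2
  have hDa : deriv f a = 0 := by
    apply IsLocalMin.deriv_eq_zero
    -- points slightly to the left of `a` are moved into the period by periodicity
    filter_upwards [Icc_mem_nhds (show a - 2 * Real.pi < a by linarith)
      (show a < a + 2 * Real.pi by linarith)] with x hx
    rw [hfa]
    rcases le_total a x with h | h
    · exact (hrange x ⟨h, hx.2⟩).1
    · rw [← hfper]
      exact (hrange _ ⟨by linarith [hx.1], by linarith⟩).1
  have hLa : LocComp (fun x => min (f x) (M - f x)) (fun x => deriv f x ^ 2) a := by
    apply locComp_of_nondegenerate_min hF hD hE hfa hDa ha''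
    filter_upwards [hfc.continuousAt.eventually_lt_const (show f a < M / 2 by
      rw [hfa]; linarith)] with x hx
    exact min_eq_left (by linarith)
  have hLb : LocComp (fun x => min (f x) (M - f x)) (fun x => deriv f x ^ 2) b := by
    have := locComp_of_nondegenerate_min (u := fun x => min (f x) (M - f x))
      (F := fun x => M - f x) (D := fun x => - deriv f x) (E := fun x => - deriv (deriv f) x)
      (p := b) (fun x => (hF x).const_sub M) (fun x => (hD x).neg) hE.neg (by simp [hfb])
      (by simp [hDb]) (by linarith) ?_
    · simpa using this
    · filter_upwards [hfc.continuousAt.eventually_const_lt (show M / 2 < f b by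
        rw [hfb]; linarith)] with x hx
      exact min_eq_right (by linarith)
  have hLa' : LocComp (fun x => min (f x) (M - f x)) (fun x => deriv f x ^ 2)
      (a + 2 * Real.pi) := by
    obtain ⟨K, hK⟩ := hLa
    refine ⟨K, ?_⟩
    have ht : Tendsto (fun x : ℝ => x - 2 * Real.pi) (𝓝 (a + 2 * Real.pi)) (𝓝 a) := by
      have : ContinuousAt (fun x : ℝ => x - 2 * Real.pi) (a + 2 * Real.pi) := by fun_prop
      simpa [ContinuousAt] using this
    filter_upwards [ht.eventually hK] with x hx
    have h1 := hfper (x - 2 * Real.pi)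
    have h2 := hdper (x - 2 * Real.pi)
    rw [sub_add_cancel] at h1 h2
    rw [h1, h2]
    exact hx
  obtain ⟨K, hK1, hK⟩ := exists_uniform_locComp
    (u := fun x => min (f x) (M - f x)) (v := fun x => deriv f x ^ 2)
    (isCompact_Icc (a := a) (b := a + 2 * Real.pi))
    (fun x hx => le_min (hrange x hx).1 (sub_nonneg.2 (hrange x hx).2))
    (fun x _ => sq_nonneg _) (by
      intro x hx
      by_cases h1 : x = a
      · rw [h1]; exact hLa
      by_cases h2 : x = a + 2 * Real.pi
      · rw [h2]; exact hLa'
      by_cases h3 : x = b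
      · rw [h3]; exact hLb
      have hx1 : a < x := lt_of_le_of_ne hx.1 (Ne.symm h1)
      have hx2 : x < a + 2 * Real.pi := lt_of_le_of_ne hx.2 h2
      have hr := hint x ⟨hx1, hx2⟩ h3
      have hne : deriv f x ≠ 0 := fun h => by
        rcases hcrit x ⟨hx.1, hx2⟩ h with h | h <;> contradiction
      apply locComp_of_pos
      · exact (hfc.min (continuous_const.sub hfc)).continuousAt
      · exact (hf1.continuous.pow 2).continuousAt
      · exact lt_min hr.1 (sub_pos.2 hr.2)
      · positivity)
  refine ⟨K ^ 2, one_le_pow₀ hK1, fun t ht => ?_⟩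
  obtain ⟨hm1, hm2⟩ := hxm t ht
  obtain ⟨hp1, hp2⟩ := hxp t ht
  have hm3 : f (xm t) = t := hm2
  have hp3 : f (xp t) = t := hp2
  have hKm := hK (xm t) ⟨hm1.1.le, by linarith [hm1.2]⟩
  have hKp := hK (xp t + 2 * Real.pi) ⟨by linarith [hp1.1], by linarith [hp1.2]⟩
  simp only [hfper, hdper, hm3, hp3] at hKm hKp
  rw [hdg, hdg]
  apply comparison_algebra hK1 (lt_min ht.1 (sub_pos.2 ht.2)) (abs_nonneg _) (abs_nonneg _)
  · simpa using hKp.1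
  · simpa using hKp.2
  · simpa using hKm.1
  · simpa using hKm.2

end
end
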